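/- arXiv:1610.02781 — 5 statements merged into one kernel-verified Lean document; each statement's English description precedes it below -/
import Mathlib

section
/- Let E be a Bernoulli(λ) random variable with λ ∈ (0,1). Let X₀ be a {0,1}-valued random variable with P(X₀ = 1) = ω ∈ [0,1]; given X₀, let I be Bernoulli(μ_{X₀}) and let X₁ be obtained from X₀ by one step of the transition matrix P, with I and X₁ conditionally independent given X₀, and with E independent of (X₀, X₁, I). Then, whenever the conditioning events have positive probability, P(X₁ = 1 | E − I = 1) = τ_f(ω) and P(X₁ = 1 | E − I = −1) = τ_s(ω). -/
open MeasureTheory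

/-- Belief update after an observed service failure. -/
noncomputable def tauF (p q mu0 mu1 ω : ℝ) : ℝ :=
  ((1 - q) * (1 - mu1) * ω + p * (1 - mu0) * (1 - ω)) / (1 - ((1 - ω) * mu0 + ω * mu1))

/-- Belief update after an observed service success. -/
noncomputable def tauS (p q mu0 mu1 ω : ℝ) : ℝ :=
  ((1 - q) * mu1 * ω + p * mu0 * (1 - ω)) / ((1 - ω) * mu0 + ω * mu1)

/-- Splitting the probability of an event according to the value of a Boolean random variable. -/
theorem measure_setOf_toReal_eq_add {Ω : Type*} [MeasurableSpace Ω] (P : Measure Ω)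
    [IsFiniteMeasure P] {Y : Ω → Bool} (hY : Measurable Y) {φ φt φf : Ω → Prop}
    (ht : ∀ a, φt a ↔ φ a ∧ Y a = true) (hf : ∀ a, φf a ↔ φ a ∧ Y a = false) :
    (P {a | φ a}).toReal = (P {a | φt a}).toReal + (P {a | φf a}).toReal := by
  have hm : MeasurableSet {a | Y a = true} := hY (measurableSet_singleton true)
  have h1 : {a | φt a} = {a | φ a} ∩ {a | Y a = true} := Set.ext ht
  have h2 : {a | φf a} = {a | φ a} \ {a | Y a = true} := by
    ext a
    simp [hf a]
  rw [h1, h2, ← ENNReal.toReal_add (measure_ne_top _ _) (measure_ne_top _ _),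
    measure_inter_add_sdiff _ hm]

/-- Cancelling the probability `c` of the conditioning event in a conditional independence
relation; when `c = 0` the joint probability `x ≤ c` vanishes as well. -/
theorem eq_mul_mul_of_mul_eq {x c m t : ℝ} (hx : 0 ≤ x) (hxc : x ≤ c)
    (h : x * c = (m * c) * (t * c)) : x = m * t * c := by
  rcases eq_or_ne c 0 with rfl | hc
  · linarith
  · exact mul_right_cancel₀ hc (by linarith)

/-- Queue observation: with `E ~ Bernoulli(λ)` independent of `(X₀, X₁, I)`, a queue increase
`E − I = 1` (i.e. `E = 1, I = 0`) yields belief `τ_f(ω)`, and a queue decrease `E − I = −1`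
(i.e. `E = 0, I = 1`) yields belief `τ_s(ω)`, whenever the conditioning events have
positive probability. -/
theorem belief_update_queue_observation
    (p q mu0 mu1 ω lam : ℝ)
    (hp : p ∈ Set.Icc (0 : ℝ) 1) (hq : q ∈ Set.Icc (0 : ℝ) 1)
    (hmu0 : mu0 ∈ Set.Icc (0 : ℝ) 1) (hmu1 : mu1 ∈ Set.Icc (0 : ℝ) 1)
    (hω : ω ∈ Set.Icc (0 : ℝ) 1) (hlam : lam ∈ Set.Ioo (0 : ℝ) 1)
    (Ω : Type*) [MeasurableSpace Ω] (P : Measure Ω) [IsProbabilityMeasure P]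
    (X0 X1 I E : Ω → Bool)
    (hX0 : Measurable X0) (hX1 : Measurable X1) (hI : Measurable I) (hE : Measurable E)
    -- E ~ Bernoulli(λ)
    (hArr : (P {a | E a = true}).toReal = lam)
    -- P(X₀ = 1) = ω
    (hInit : (P {a | X0 a = true}).toReal = ω)
    -- conditional law of I given X₀: I ~ Bernoulli(μ_{X₀})
    (hI0 : (P {a | I a = true ∧ X0 a = false}).toReal
            = mu0 * (P {a | X0 a = false}).toReal)
    (hI1 : (P {a | I a = true ∧ X0 a = true}).toReal
            = mu1 * (P {a | X0 a = true}).toReal)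
    -- transition of the chain: P(X₁=1 | X₀=0) = p, P(X₁=1 | X₀=1) = 1 − q
    (hT0 : (P {a | X1 a = true ∧ X0 a = false}).toReal
            = p * (P {a | X0 a = false}).toReal)
    (hT1 : (P {a | X1 a = true ∧ X0 a = true}).toReal
            = (1 - q) * (P {a | X0 a = true}).toReal)
    -- conditional independence of I and X₁ given X₀
    (hCI : ∀ i j k : Bool,
      (P {a | I a = i ∧ X1 a = j ∧ X0 a = k}).toReal * (P {a | X0 a = k}).toReal
        = (P {a | I a = i ∧ X0 a = k}).toReal * (P {a | X1 a = j ∧ X0 a = k}).toReal)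
    -- E is independent of (X₀, X₁, I)
    (hInd : ∀ e i j k : Bool,
      (P {a | E a = e ∧ X0 a = i ∧ X1 a = j ∧ I a = k}).toReal
        = (P {a | E a = e}).toReal * (P {a | X0 a = i ∧ X1 a = j ∧ I a = k}).toReal) :
    -- queue increase ⇒ belief τ_f(ω); queue decrease ⇒ belief τ_s(ω)
    (0 < (P {a | E a = true ∧ I a = false}).toReal →
      (P {a | X1 a = true ∧ E a = true ∧ I a = false}).toReal
        / (P {a | E a = true ∧ I a = false}).toReal = tauF p q mu0 mu1 ω) ∧
    (0 < (P {a | E a = false ∧ I a = true}).toReal →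
      (P {a | X1 a = true ∧ E a = false ∧ I a = true}).toReal
        / (P {a | E a = false ∧ I a = true}).toReal = tauS p q mu0 mu1 ω) := by
  have hX0f : (P {a | X0 a = false}).toReal = 1 - ω := by
    have h := measure_setOf_toReal_eq_add P hX0 (φ := fun _ => True)
      (φt := fun a => X0 a = true) (φf := fun a => X0 a = false) (by simp) (by simp)
    simp only [Set.ofPred_true, measure_univ, ENNReal.toReal_one] at h
    linarith
  have hEf : (P {a | E a = false}).toReal = 1 - lam := by
    have h := measure_setOf_toReal_eq_add P hE (φ := fun _ => True)
      (φt := fun a => E a = true) (φf := fun a => E a = false) (by simp) (by simp)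
    simp only [Set.ofPred_true, measure_univ, ENNReal.toReal_one] at h
    linarith
  have hIfail (k : Bool) : (P {a | I a = false ∧ X0 a = k}).toReal
      = (P {a | X0 a = k}).toReal - (P {a | I a = true ∧ X0 a = k}).toReal := by
    have h := measure_setOf_toReal_eq_add P hI (φ := fun a => X0 a = k)
      (φt := fun a => I a = true ∧ X0 a = k) (φf := fun a => I a = false ∧ X0 a = k)
      (by grind) (by grind)
    linarith
  have hImarg (i : Bool) : (P {a | I a = i}).toReal
      = (P {a | I a = i ∧ X0 a = true}).toReal + (P {a | I a = i ∧ X0 a = false}).toReal :=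
    measure_setOf_toReal_eq_add P hX0 (by grind) (by grind)
  have hIX1 (i j : Bool) : (P {a | X1 a = j ∧ I a = i}).toReal
      = (P {a | I a = i ∧ X1 a = j ∧ X0 a = true}).toReal
        + (P {a | I a = i ∧ X1 a = j ∧ X0 a = false}).toReal :=
    measure_setOf_toReal_eq_add P hX0 (by grind) (by grind)
  have hjoint (e i j : Bool) : (P {a | X1 a = j ∧ E a = e ∧ I a = i}).toReal
      = (P {a | E a = e}).toReal * (P {a | X1 a = j ∧ I a = i}).toReal := by
    have h1 := measure_setOf_toReal_eq_add P hX0 (φ := fun a => X1 a = j ∧ E a = e ∧ I a = i)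
      (φt := fun a => E a = e ∧ X0 a = true ∧ X1 a = j ∧ I a = i)
      (φf := fun a => E a = e ∧ X0 a = false ∧ X1 a = j ∧ I a = i) (by grind) (by grind)
    have h2 := measure_setOf_toReal_eq_add P hX0 (φ := fun a => X1 a = j ∧ I a = i)
      (φt := fun a => X0 a = true ∧ X1 a = j ∧ I a = i)
      (φf := fun a => X0 a = false ∧ X1 a = j ∧ I a = i) (by grind) (by grind)
    rw [h1, h2, hInd, hInd, mul_add]
  have hmarg (e i : Bool) : (P {a | E a = e ∧ I a = i}).toReal
      = (P {a | E a = e}).toReal * (P {a | I a = i}).toReal := by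
    have h1 := measure_setOf_toReal_eq_add P hX1 (φ := fun a => E a = e ∧ I a = i)
      (φt := fun a => X1 a = true ∧ E a = e ∧ I a = i)
      (φf := fun a => X1 a = false ∧ E a = e ∧ I a = i) (by grind) (by grind)
    have h2 := measure_setOf_toReal_eq_add P hX1 (φ := fun a => I a = i)
      (φt := fun a => X1 a = true ∧ I a = i)
      (φf := fun a => X1 a = false ∧ I a = i) (by grind) (by grind)
    rw [h1, h2, hjoint, hjoint, mul_add]
  have hcond (i j k : Bool) {m t : ℝ}
      (hm : (P {a | I a = i ∧ X0 a = k}).toReal = m * (P {a | X0 a = k}).toReal)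
      (ht : (P {a | X1 a = j ∧ X0 a = k}).toReal = t * (P {a | X0 a = k}).toReal) :
      (P {a | I a = i ∧ X1 a = j ∧ X0 a = k}).toReal = m * t * (P {a | X0 a = k}).toReal :=
    eq_mul_mul_of_mul_eq ENNReal.toReal_nonneg
      (ENNReal.toReal_mono (measure_ne_top _ _) (measure_mono fun a ha => ha.2.2))
      (by rw [hCI, hm, ht])
  have hI0f : (P {a | I a = false ∧ X0 a = false}).toReal
      = (1 - mu0) * (P {a | X0 a = false}).toReal := by
    rw [hIfail, hI0]; ring
  have hI1f : (P {a | I a = false ∧ X0 a = true}).toReal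
      = (1 - mu1) * (P {a | X0 a = true}).toReal := by
    rw [hIfail, hI1]; ring
  constructor
  · intro _
    rw [hjoint, hmarg, hArr, mul_div_mul_left _ _ hlam.1.ne', hIX1, hImarg,
      hcond _ _ _ hI1f hT1, hcond _ _ _ hI0f hT0, hI1f, hI0f, hX0f, hInit, tauF]
    congr 1 <;> ring
  · intro _
    rw [hjoint, hmarg, hEf, mul_div_mul_left _ _ (sub_pos.2 hlam.2).ne', hIX1, hImarg,
      hcond _ _ _ hI1 hT1, hcond _ _ _ hI0 hT0, hI1, hI0, hX0f, hInit, tauS]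
    congr 1 <;> ring
end

section
/- Suppose p, q ∈ (0,1), μ₀, μ₁ ∈ (0,1) with μ₀ ≠ μ₁, and ρ = 1−p−q ≠ 0. Set a = (1−q)(1−μ₁) − p(1−μ₀), b = p(1−μ₀), c = (1−μ₁) − (1−μ₀), d = 1−μ₀. Then the fixed-point equation τ_f(ω) = ω has two distinct real solutions (equivalently, (a−d)² + 4bc > 0 and c ≠ 0), and the solution ω* = (a − d + √((a−d)² + 4bc))/(2c) satisfies ω* ∈ (0,1). -/
/-- A root of `c ω² = (a − d) ω + b` is a fixed point of `τ_f`: the denominator cannot vanish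
there because the Möbius determinant `(1−p−q)(1−μ₀)(1−μ₁)` is nonzero. -/
lemma tauF_eq_self_of_quadratic {p q mu0 mu1 ω : ℝ} (h0 : mu0 ≠ 1) (h1 : mu1 ≠ 1)
    (hrho : 1 - p - q ≠ 0)
    (h : (1 - q) * (1 - mu1) * ω + p * (1 - mu0) * (1 - ω)
      = ω * (1 - ((1 - ω) * mu0 + ω * mu1))) :
    tauF p q mu0 mu1 ω = ω := by
  have hden : 1 - ((1 - ω) * mu0 + ω * mu1) ≠ 0 := by
    intro hz
    rw [hz, mul_zero] at h
    have hdet : (1 - p - q) * (1 - mu0) * (1 - mu1) = 0 := by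
      linear_combination ((1 - q) * (1 - mu1) - p * (1 - mu0)) * hz - (mu0 - mu1) * h
    exact mul_ne_zero (mul_ne_zero hrho (sub_ne_zero.2 h0.symm)) (sub_ne_zero.2 h1.symm) hdet
  rw [tauF, div_eq_iff hden, h]

/-- If `c x² + m x − b` is negative at `0` and positive at `1`, its discriminant is positive. -/
lemma discrim_pos_of_sign_change {m b c : ℝ} (hb : 0 < b) (hc : c ≠ 0) (he : b < c + m) :
    0 < m ^ 2 + 4 * b * c := by
  rcases lt_or_gt_of_ne hc with hneg | hpos
  · nlinarith [sq_nonneg (b + c)]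
  · positivity

/-- If `c x² + m x − b` is negative at `0` and positive at `1`, its root with positive slope lies
in `(0, 1)`. -/
lemma root_mem_Ioo_of_sign_change {m b c : ℝ} (hb : 0 < b) (hc : c ≠ 0) (he : b < c + m) :
    (-m + √(m ^ 2 + 4 * b * c)) / (2 * c) ∈ Set.Ioo (0 : ℝ) 1 := by
  have hD := discrim_pos_of_sign_change hb hc he
  have hs : 0 < √(m ^ 2 + 4 * b * c) := Real.sqrt_pos.2 hD
  have hsq := Real.sq_sqrt hD.le
  set s := √(m ^ 2 + 4 * b * c)
  have hms : 0 < m + s := by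
    rcases lt_or_gt_of_ne hc with hneg | hpos
    · linarith
    · have hbc : 0 < b * c := mul_pos hb hpos
      nlinarith
  have hroot : (-m + s) / (2 * c) = 2 * b / (m + s) := by
    rw [div_eq_div_iff (by simpa using hc) hms.ne']
    linear_combination hsq
  rw [hroot]
  refine ⟨by positivity, (div_lt_one hms).2 ?_⟩
  by_contra! hle
  have hbe : 0 < b * (c + m - b) := mul_pos hb (by linarith)
  nlinarith

/-- For `p, q ∈ (0,1)`, `μ₀ ≠ μ₁ ∈ (0,1)` and `ρ = 1−p−q ≠ 0`, the equation `τ_f(ω) = ω`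
has two distinct real solutions (equivalently `(a−d)² + 4bc > 0` and `c ≠ 0`), and the
solution `ω* = (a − d + √((a−d)² + 4bc))/(2c)` lies in `(0,1)`. -/
theorem tauF_fixed_points
    (p q mu0 mu1 : ℝ)
    (hp : p ∈ Set.Ioo (0 : ℝ) 1) (hq : q ∈ Set.Ioo (0 : ℝ) 1)
    (hmu0 : mu0 ∈ Set.Ioo (0 : ℝ) 1) (hmu1 : mu1 ∈ Set.Ioo (0 : ℝ) 1)
    (hmu : mu0 ≠ mu1) (hrho : 1 - p - q ≠ 0)
    (a b c d : ℝ)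
    (ha : a = (1 - q) * (1 - mu1) - p * (1 - mu0))
    (hb : b = p * (1 - mu0))
    (hc : c = (1 - mu1) - (1 - mu0))
    (hd : d = 1 - mu0) :
    c ≠ 0 ∧ 0 < (a - d) ^ 2 + 4 * b * c ∧
    (∃ ω₁ ω₂ : ℝ, ω₁ ≠ ω₂ ∧ tauF p q mu0 mu1 ω₁ = ω₁ ∧ tauF p q mu0 mu1 ω₂ = ω₂) ∧
    tauF p q mu0 mu1 ((a - d + Real.sqrt ((a - d) ^ 2 + 4 * b * c)) / (2 * c))
      = (a - d + Real.sqrt ((a - d) ^ 2 + 4 * b * c)) / (2 * c) ∧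
    (a - d + Real.sqrt ((a - d) ^ 2 + 4 * b * c)) / (2 * c) ∈ Set.Ioo (0 : ℝ) 1 := by
  obtain ⟨hp0, -⟩ := hp
  obtain ⟨hq0, -⟩ := hq
  have h0 : 0 < 1 - mu0 := sub_pos.2 hmu0.2
  have h1 : 0 < 1 - mu1 := sub_pos.2 hmu1.2
  have hc0 : c ≠ 0 := by
    rw [hc, sub_sub_sub_cancel_left]
    exact sub_ne_zero.2 hmu
  have hb0 : 0 < b := hb ▸ mul_pos hp0 h0
  have he : b < c + (d - a) := by
    have := mul_pos hq0 h1
    subst ha hb hc hd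
    linarith
  have hD := discrim_pos_of_sign_change hb0 hc0 he
  have hmem := root_mem_Ioo_of_sign_change hb0 hc0 he
  rw [sub_sq_comm] at hD
  rw [neg_sub, sub_sq_comm d a] at hmem
  have hfix : ∀ t : ℝ, t ^ 2 = (a - d) ^ 2 + 4 * b * c →
      tauF p q mu0 mu1 ((a - d + t) / (2 * c)) = (a - d + t) / (2 * c) := by
    intro t ht
    refine tauF_eq_self_of_quadratic hmu0.2.ne hmu1.2.ne hrho ?_
    have hquad : c * ((a - d + t) / (2 * c)) ^ 2
        = (a - d) * ((a - d + t) / (2 * c)) + b := by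
      field_simp
      linear_combination ht
    generalize (a - d + t) / (2 * c) = ω at hquad ⊢
    subst ha hb hc hd
    linear_combination -hquad
  have hsq := Real.sq_sqrt hD.le
  have hs : 0 < √((a - d) ^ 2 + 4 * b * c) := Real.sqrt_pos.2 hD
  refine ⟨hc0, hD, ⟨_, _, ?_, hfix _ hsq, hfix _ ((neg_sq _).trans hsq)⟩, hfix _ hsq, hmem⟩
  intro heq
  rw [div_left_inj' (by simpa using hc0)] at heq
  linarith
end

section
/- Suppose p, q ∈ (0,1), μ₀, μ₁ ∈ (0,1) with μ₀ ≠ μ₁, and ρ = 1−p−q ≠ 0. Set a' = (1−q)μ₁ − pμ₀, b' = pμ₀, c' = μ₁ − μ₀, d' = μ₀. Then the fixed-point equation τ_s(ω) = ω has two distinct real solutions (equivalently, (a'−d')² + 4b'c' > 0 and c' ≠ 0), and the solution ω* = (a' − d' + √((a'−d')² + 4b'c'))/(2c') satisfies ω* ∈ (0,1). -/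
/-- Roots of the quadratic `c' ω² - (a' - d') ω - b'` are fixed points of `tauS`: the determinant
`μ₀ μ₁ (1 - p - q)` of the Möbius transformation does not vanish, so neither does its denominator
at a root. -/
theorem tauS_eq_self_of_quadratic {p q mu0 mu1 ω : ℝ} (h0 : mu0 ≠ 0) (h1 : mu1 ≠ 0)
    (hrho : 1 - p - q ≠ 0)
    (h : (mu1 - mu0) * ω ^ 2 = ((1 - q) * mu1 - p * mu0 - mu0) * ω + p * mu0) :
    tauS p q mu0 mu1 ω = ω := by
  have hr : (1 - ω) * mu0 + ω * mu1 ≠ 0 := by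
    intro hr
    refine mul_ne_zero (mul_ne_zero h0 h1) hrho ?_
    linear_combination ((1 - q) * mu1 - p * mu0 - (mu1 - mu0) * ω) * hr + (mu1 - mu0) * h
  rw [tauS, div_eq_iff hr]
  linear_combination -h

/-- For `p, q ∈ (0,1)`, `μ₀ ≠ μ₁ ∈ (0,1)` and `ρ = 1−p−q ≠ 0`, the equation `τ_s(ω) = ω`
has two distinct real solutions (equivalently `(a'−d')² + 4b'c' > 0` and `c' ≠ 0`), and the
solution `ω* = (a' − d' + √((a'−d')² + 4b'c'))/(2c')` lies in `(0,1)`. -/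
theorem tauS_fixed_points
    (p q mu0 mu1 : ℝ)
    (hp : p ∈ Set.Ioo (0 : ℝ) 1) (hq : q ∈ Set.Ioo (0 : ℝ) 1)
    (hmu0 : mu0 ∈ Set.Ioo (0 : ℝ) 1) (hmu1 : mu1 ∈ Set.Ioo (0 : ℝ) 1)
    (hmu : mu0 ≠ mu1) (hrho : 1 - p - q ≠ 0)
    (a' b' c' d' : ℝ)
    (ha : a' = (1 - q) * mu1 - p * mu0)
    (hb : b' = p * mu0)
    (hc : c' = mu1 - mu0)
    (hd : d' = mu0) :
    c' ≠ 0 ∧ 0 < (a' - d') ^ 2 + 4 * b' * c' ∧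
    (∃ ω₁ ω₂ : ℝ, ω₁ ≠ ω₂ ∧ tauS p q mu0 mu1 ω₁ = ω₁ ∧ tauS p q mu0 mu1 ω₂ = ω₂) ∧
    tauS p q mu0 mu1 ((a' - d' + Real.sqrt ((a' - d') ^ 2 + 4 * b' * c')) / (2 * c'))
      = (a' - d' + Real.sqrt ((a' - d') ^ 2 + 4 * b' * c')) / (2 * c') ∧
    (a' - d' + Real.sqrt ((a' - d') ^ 2 + 4 * b' * c')) / (2 * c') ∈ Set.Ioo (0 : ℝ) 1 := by
  obtain ⟨hp0, -⟩ := hp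
  obtain ⟨hq0, -⟩ := hq
  obtain ⟨h0, -⟩ := hmu0
  obtain ⟨h1, -⟩ := hmu1
  have hc0 : c' ≠ 0 := hc ▸ sub_ne_zero.mpr hmu.symm
  have hb0 : 0 < b' := hb ▸ mul_pos hp0 h0
  have hlt : 0 < c' - (a' - d') - b' := by
    have : c' - (a' - d') - b' = q * mu1 := by subst ha hb hc hd; ring
    exact this ▸ mul_pos hq0 h1
  have hdisc : (a' - d' + 2 * b') ^ 2 < (a' - d') ^ 2 + 4 * b' * c' := by
    nlinarith [mul_pos hb0 hlt]
  have hD : 0 < (a' - d') ^ 2 + 4 * b' * c' := (sq_nonneg _).trans_lt hdisc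
  have hs : a' - d' + 2 * b' < √((a' - d') ^ 2 + 4 * b' * c') := Real.lt_sqrt_of_sq_lt hdisc
  have hs0 := Real.sqrt_pos.mpr hD
  have hsq := Real.sq_sqrt hD.le
  set s := √((a' - d') ^ 2 + 4 * b' * c')
  have hfix : ∀ t : ℝ, t ^ 2 = (a' - d') ^ 2 + 4 * b' * c' →
      tauS p q mu0 mu1 ((a' - d' + t) / (2 * c')) = (a' - d' + t) / (2 * c') := by
    intro t ht
    refine tauS_eq_self_of_quadratic h0.ne' h1.ne' hrho ?_
    rw [← hc, ← ha, ← hb, ← hd]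
    field_simp
    linear_combination ht
  have hroot : (a' - d' + s) / (2 * c') = 2 * b' / (s - (a' - d')) := by
    rw [div_eq_div_iff (by simpa using hc0) (by linarith)]
    linear_combination hsq
  refine ⟨hc0, hD, ⟨_, _, ?_, hfix s hsq, hfix (-s) (by rw [neg_sq, hsq])⟩, hfix s hsq, ?_⟩
  · intro h
    rw [div_left_inj' (by simpa using hc0)] at h
    linarith
  · rw [hroot]
    exact ⟨div_pos (by linarith) (by linarith), (div_lt_one (by linarith)).mpr (by linarith)⟩
end

section
/- Suppose p, q ∈ (0,1), μ₀, μ₁ ∈ (0,1) with μ₀ ≠ μ₁, and ρ = 1−p−q ≠ 0. With a = (1−q)(1−μ₁) − p(1−μ₀), b = p(1−μ₀), c = (1−μ₁) − (1−μ₀), d = 1−μ₀, and ω* = (a − d + √((a−d)² + 4bc))/(2c), the fixed point ω* of τ_f is stable: the derivative of τ_f at ω* has absolute value strictly less than 1. -/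
/-- `τ_f` is the Möbius transformation of a matrix of determinant `(1−μ₀)(1−μ₁)(1−p−q)`. -/
lemma hasDerivAt_tauF (p q mu0 mu1 ω : ℝ) (h : 1 - ((1 - ω) * mu0 + ω * mu1) ≠ 0) :
    HasDerivAt (tauF p q mu0 mu1)
      ((1 - mu0) * (1 - mu1) * (1 - p - q) / (1 - ((1 - ω) * mu0 + ω * mu1)) ^ 2) ω := by
  have hnum : HasDerivAt
      (fun x : ℝ => (1 - q) * (1 - mu1) * x + p * (1 - mu0) * (1 - x))
      ((1 - q) * (1 - mu1) * 1 + p * (1 - mu0) * (-1)) ω :=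
    ((hasDerivAt_id ω).const_mul _).add (((hasDerivAt_id ω).const_sub 1).const_mul _)
  have hden : HasDerivAt (fun x : ℝ => 1 - ((1 - x) * mu0 + x * mu1))
      (-((-1) * mu0 + 1 * mu1)) ω :=
    ((((hasDerivAt_id ω).const_sub 1).mul_const mu0).add
      ((hasDerivAt_id ω).mul_const mu1)).const_sub 1
  refine (hnum.div hden h).congr_deriv ?_
  congr 1
  ring

/-- For `p, q ∈ (0,1)`, `μ₀ ≠ μ₁ ∈ (0,1)` and `ρ = 1−p−q ≠ 0`, the fixed point
`ω* = (a − d + √((a−d)² + 4bc))/(2c)` of `τ_f` is stable: the derivative of `τ_f`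
at `ω*` has absolute value strictly less than `1`. -/
theorem tauF_fixed_point_stable
    (p q mu0 mu1 : ℝ)
    (hp : p ∈ Set.Ioo (0 : ℝ) 1) (hq : q ∈ Set.Ioo (0 : ℝ) 1)
    (hmu0 : mu0 ∈ Set.Ioo (0 : ℝ) 1) (hmu1 : mu1 ∈ Set.Ioo (0 : ℝ) 1)
    (hmu : mu0 ≠ mu1) (hrho : 1 - p - q ≠ 0)
    (a b c d ωs : ℝ)
    (ha : a = (1 - q) * (1 - mu1) - p * (1 - mu0))
    (hb : b = p * (1 - mu0))
    (hc : c = (1 - mu1) - (1 - mu0))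
    (hd : d = 1 - mu0)
    (hωs : ωs = (a - d + Real.sqrt ((a - d) ^ 2 + 4 * b * c)) / (2 * c)) :
    |deriv (tauF p q mu0 mu1) ωs| < 1 := by
  obtain ⟨hp0, hp1⟩ := hp
  obtain ⟨hq0, hq1⟩ := hq
  have hx : 0 < 1 - mu0 := sub_pos.2 hmu0.2
  have hy : 0 < 1 - mu1 := sub_pos.2 hmu1.2
  have hc0 : c ≠ 0 := fun h => hmu (by linarith)
  have htrace : 0 < a + d := by
    have h : a + d = (1 - q) * (1 - mu1) + (1 - p) * (1 - mu0) := by rw [ha, hd]; ring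
    rw [h]
    exact add_pos (mul_pos (sub_pos.2 hq1) hy) (mul_pos (sub_pos.2 hp1) hx)
  have hdisc : 0 < (a - d) ^ 2 + 4 * b * c := by
    have h : (a - d) ^ 2 + 4 * b * c =
        ((1 - q) * (1 - mu1) - (1 - p) * (1 - mu0)) ^ 2
          + 4 * ((1 - mu0) * (1 - mu1) * (p * q)) := by
      rw [ha, hb, hc, hd]; ring
    rw [h]
    positivity
  set s := Real.sqrt ((a - d) ^ 2 + 4 * b * c)
  have hs0 : 0 < s := Real.sqrt_pos.2 hdisc
  have hsq : s ^ 2 = (a - d) ^ 2 + 4 * b * c := Real.sq_sqrt hdisc.le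
  have hden : 1 - ((1 - ωs) * mu0 + ωs * mu1) = (a + d + s) / 2 := by
    have h : c * ωs = (a - d + s) / 2 := by rw [hωs]; field_simp
    linear_combination h - ωs * hc - hd
  -- The determinant is the product of the eigenvalues `(a + d ± s) / 2`.
  have hdet : (1 - mu0) * (1 - mu1) * (1 - p - q) = (a + d + s) / 2 * ((a + d - s) / 2) := by
    have h : (1 - mu0) * (1 - mu1) * (1 - p - q) = a * d - b * c := by
      rw [ha, hb, hc, hd]; ring
    linear_combination h + hsq / 4
  have hpos : 0 < (a + d + s) / 2 := by positivity
  rw [(hasDerivAt_tauF p q mu0 mu1 ωs (by rw [hden]; exact hpos.ne')).deriv, hden, hdet,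
    sq, mul_div_mul_left _ _ hpos.ne', abs_div, abs_of_pos hpos, div_lt_one hpos, abs_lt]
  constructor <;> linarith
end

section
/- Let γ₁, γ₂ ∈ [0,1] and μ₀⁽¹⁾, μ₁⁽¹⁾, μ₀⁽²⁾, μ₁⁽²⁾ ∈ [0,1] satisfy μ₀⁽²⁾ ≤ μ₀⁽¹⁾ < μ₁⁽¹⁾ ≤ μ₁⁽²⁾. Then (1−γ₁)(1−γ₂)μ₀⁽¹⁾ + γ₂μ₁⁽²⁾ + γ₁(1−γ₂)μ₁⁽¹⁾ ≥ max( (1−γ₁)μ₀⁽¹⁾ + γ₁μ₁⁽¹⁾ , (1−γ₂)μ₀⁽²⁾ + γ₂μ₁⁽²⁾ ), i.e. the full-observation stability bound μ*_full is at least the no-observation stability bound μ*_no. -/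
/-- Under the ordering `μ₀⁽²⁾ ≤ μ₀⁽¹⁾ < μ₁⁽¹⁾ ≤ μ₁⁽²⁾`, the full-observation stability
bound `μ*_full = (1−γ₁)(1−γ₂)μ₀⁽¹⁾ + γ₂μ₁⁽²⁾ + γ₁(1−γ₂)μ₁⁽¹⁾` dominates the
no-observation stability bound `μ*_no = max_j((1−γⱼ)μ₀⁽ʲ⁾ + γⱼμ₁⁽ʲ⁾)`. -/
theorem full_ge_no_observation
    (γ1 γ2 mu01 mu11 mu02 mu12 : ℝ)
    (hγ1 : γ1 ∈ Set.Icc (0 : ℝ) 1) (hγ2 : γ2 ∈ Set.Icc (0 : ℝ) 1)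
    (hmu01 : mu01 ∈ Set.Icc (0 : ℝ) 1) (hmu11 : mu11 ∈ Set.Icc (0 : ℝ) 1)
    (hmu02 : mu02 ∈ Set.Icc (0 : ℝ) 1) (hmu12 : mu12 ∈ Set.Icc (0 : ℝ) 1)
    (h1 : mu02 ≤ mu01) (h2 : mu01 < mu11) (h3 : mu11 ≤ mu12) :
    max ((1 - γ1) * mu01 + γ1 * mu11) ((1 - γ2) * mu02 + γ2 * mu12)
      ≤ (1 - γ1) * (1 - γ2) * mu01 + γ2 * mu12 + γ1 * (1 - γ2) * mu11 := by
  obtain ⟨hγ1_nonneg, hγ1_le⟩ := hγ1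
  obtain ⟨hγ2_nonneg, hγ2_le⟩ := hγ2
  have hmean_le : (1 - γ1) * mu01 + γ1 * mu11 ≤ mu12 := by
    linarith [mul_nonneg (sub_nonneg.2 hγ1_le) (sub_nonneg.2 h2.le)]
  have hle_mean : mu02 ≤ (1 - γ1) * mu01 + γ1 * mu11 := by
    linarith [mul_nonneg hγ1_nonneg (sub_nonneg.2 h2.le)]
  apply max_le
  · linarith [mul_nonneg hγ2_nonneg (sub_nonneg.2 hmean_le)]
  · linarith [mul_nonneg (sub_nonneg.2 hγ2_le) (sub_nonneg.2 hle_mean)]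
end
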